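/- Let 1 ≤ k ≤ L be integers, λ > 0, K ∈ ℕ, c ≥ 0, and let s be a solution of the truncated system on coordinates 1,…,K with s_{K+1}(t) = c for all t ≥ 0. If the initial conditions satisfy 1 = s_0(0) ≥ s_1(0) ≥ … ≥ s_K(0) ≥ s_{K+1}(0) = c, then for all t ≥ 0, 1 = s_0(t) ≥ s_1(t) ≥ … ≥ s_K(t) ≥ s_{K+1}(t) = c. -/

import Mathlib

open Finset Set

/-- The polynomial `f ≡ f^{(L,k)}` from the paper. -/
noncomputable def fLk (L k : ℕ) (x : ℝ) : ℝ :=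
  ∑ i ∈ Finset.Icc 1 k,
    (L.choose (L - k + i) : ℝ) * ((L - k + i - 2).choose (i - 1) : ℝ) *
      (-1 : ℝ) ^ (i - 1) * x ^ (L - k + i)

/-- A solution of the truncated system \eqref{eqn:truncSys}-\eqref{eqn:truncInit}
on coordinates `1,…,K` with boundary value `c` at coordinate `K+1`. -/
def IsTruncSol (L k : ℕ) (lam : ℝ) (K : ℕ) (c : ℝ) (s : ℝ → ℕ → ℝ) : Prop :=
  (∀ t ∈ Set.Ici (0 : ℝ), s t 0 = 1) ∧
  (∀ t ∈ Set.Ici (0 : ℝ), s t (K + 1) = c) ∧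
  (∀ j, 1 ≤ j → j ≤ K → ∀ t ∈ Set.Ici (0 : ℝ),
    HasDerivWithinAt (fun τ => s τ j)
      (lam * (fLk L k (s t (j - 1)) - fLk L k (s t j)) - k * (s t j - s t (j + 1)))
      (Set.Ici (0 : ℝ)) t)

lemma aux_choose (e q i : ℕ) (hi : i ≤ q) :
    (e+q+2).choose (e+i+2) * (e+i).choose i * ((e+i+2) * (e+i+1)) =
      (e+q+2)*(e+q+1) * ((e+q).choose e) * q.choose i := by
  have h1 := Nat.add_one_mul_choose_eq (e+q+1) (e+i+1)
  have h2 := Nat.add_one_mul_choose_eq (e+q) (e+i)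
  have h3 := Nat.choose_mul (n := e+q) (k := e+i) (s := e) (by omega)
  rw [show e + q - e = q by omega, show e + i - e = i by omega] at h3
  have h4 : (e+i).choose i = (e+i).choose e := by
    rw [← Nat.choose_symm_add]
  rw [h4]
  calc _ = ((e+q+1+1).choose (e+i+1+1) * (e+i+1+1)) * (e+i+1) * (e+i).choose e := by ring
    _ = (e+q+1+1) * ((e+q+1).choose (e+i+1) * (e+i+1)) * (e+i).choose e := by rw [← h1]; ring
    _ = (e+q+1+1) * (e+q+1) * ((e+q).choose (e+i) * (e+i).choose e) := by rw [← h2]; ring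
    _ = _ := by rw [h3]; ring

lemma fLk_eq (d q : ℕ) (x : ℝ) : fLk (d+(q+1)) (q+1) x = ∑ i ∈ Finset.range (q+1),
    ((d+(q+1)).choose (d+i+1) : ℝ) * ((d+i-1).choose i : ℝ) * (-1 : ℝ)^i * x^(d+i+1) := by
  unfold fLk
  symm
  refine Finset.sum_bij (fun i _ => i + 1) ?_ ?_ ?_ ?_
  · intro i hi
    simp only [Finset.mem_range, Finset.mem_Icc] at *
    omega
  · intro i _ j _ h
    simpa using h
  · intro b hb
    simp only [Finset.mem_Icc] at hb
    exact ⟨b - 1, Finset.mem_range.2 (by omega), by omega⟩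
  · intro i _
    rw [show d + (q+1) - (q+1) + (i+1) = d+i+1 by omega, show d+i+1-2 = d+i-1 by omega,
      Nat.add_sub_cancel]

lemma fLk_mono (L k : ℕ) (hk : 1 ≤ k) (hkL : k ≤ L) : MonotoneOn (fLk L k) (Set.Icc 0 1) := by
  obtain ⟨q, rfl⟩ : ∃ q, k = q + 1 := ⟨k-1, by omega⟩
  obtain ⟨d, rfl⟩ : ∃ d, L = d + (q+1) := ⟨L-(q+1), by omega⟩
  rw [show fLk (d+(q+1)) (q+1) = _ from funext (fLk_eq d q)]
  rcases d with _ | e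
  · intro x hx y hy hxy
    simp only
    apply Finset.sum_le_sum
    intro i hi
    rcases i with _ | i
    · simp; gcongr
    · simp
  · have h1 : ∀ x : ℝ, HasDerivAt (fun x : ℝ => ∑ i ∈ Finset.range (q+1),
      ((e+1+(q+1)).choose (e+1+i+1) : ℝ) * ((e+1+i-1).choose i : ℝ) * (-1 : ℝ)^i * x^(e+1+i+1))
      (∑ i ∈ Finset.range (q+1),
      ((e+1+(q+1)).choose (e+1+i+1) : ℝ) * ((e+1+i-1).choose i : ℝ) * (-1 : ℝ)^i *
        (((e+1+i+1 : ℕ) : ℝ) * x^(e+1+i))) x := by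
      intro x
      apply HasDerivAt.fun_sum
      intro i _
      exact (hasDerivAt_pow (e+1+i+1) x).const_mul _
    have h2 : ∀ x : ℝ, HasDerivAt (fun x : ℝ => ∑ i ∈ Finset.range (q+1),
      ((e+1+(q+1)).choose (e+1+i+1) : ℝ) * ((e+1+i-1).choose i : ℝ) * (-1 : ℝ)^i *
        (((e+1+i+1 : ℕ) : ℝ) * x^(e+1+i)))
       (((e+q+2)*(e+q+1) * ((e+q).choose e) : ℕ) * (x^e * (1-x)^q)) x := by
      intro x
      have : HasDerivAt (fun x : ℝ => ∑ i ∈ Finset.range (q+1),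
        ((e+1+(q+1)).choose (e+1+i+1) : ℝ) * ((e+1+i-1).choose i : ℝ) * (-1 : ℝ)^i *
        (((e+1+i+1 : ℕ) : ℝ) * x^(e+1+i))) (∑ i ∈ Finset.range (q+1),
        ((e+1+(q+1)).choose (e+1+i+1) : ℝ) * ((e+1+i-1).choose i : ℝ) * (-1 : ℝ)^i *
        (((e+1+i+1 : ℕ) : ℝ) * (((e+1+i : ℕ) : ℝ) * x^(e+1+i-1)))) x := by
        apply HasDerivAt.fun_sum
        intro i _
        exact ((hasDerivAt_pow (e+1+i) x).const_mul _).const_mul _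
      convert this using 1
      rw [show (1 - x) = (-x) + 1 by ring, add_pow, Finset.mul_sum, Finset.mul_sum]
      apply Finset.sum_congr rfl
      intro i hi
      have hi' : i ≤ q := by simpa [Nat.lt_succ_iff] using hi
      have := congrArg (Nat.cast (R := ℝ)) (aux_choose e q i hi')
      rw [show e+1+(q+1) = e+q+2 by ring, show e+1+i+1 = e+i+2 by ring, show e+1+i = e+i+1 by ring,
        show e+i+1-1 = e+i by omega]
      push_cast at this ⊢
      rw [neg_pow x, pow_add, one_pow]
      linear_combination (-(x^e*x^i*(-1)^i)) * this
    have m1 : MonotoneOn (fun x : ℝ => ∑ i ∈ Finset.range (q+1),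
      ((e+1+(q+1)).choose (e+1+i+1) : ℝ) * ((e+1+i-1).choose i : ℝ) * (-1 : ℝ)^i *
        (((e+1+i+1 : ℕ) : ℝ) * x^(e+1+i))) (Set.Icc 0 1) := by
      apply monotoneOn_of_deriv_nonneg (convex_Icc 0 1)
      · exact fun x _ => (h2 x).continuousAt.continuousWithinAt
      · exact fun x _ => (h2 x).differentiableAt.differentiableWithinAt
      · intro x hx
        rw [(h2 x).deriv]
        rw [interior_Icc] at hx
        have := hx.1
        have := sub_pos.2 hx.2
        positivity
    apply monotoneOn_of_deriv_nonneg (convex_Icc 0 1)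
    · exact fun x _ => (h1 x).continuousAt.continuousWithinAt
    · exact fun x _ => (h1 x).differentiableAt.differentiableWithinAt
    · intro x hx
      rw [(h1 x).deriv]
      have hx := interior_subset hx
      have := m1 (Set.left_mem_Icc.2 zero_le_one) hx hx.1
      refine le_trans (le_of_eq ?_) this
      symm
      apply Finset.sum_eq_zero
      intro i _
      rw [zero_pow (by omega)]; simp

lemma quasi_pos (K : ℕ) (d d' : ℝ → ℕ → ℝ) (T C : ℝ)
    (hd : ∀ j ≤ K, ∀ t ∈ Set.Ici (0:ℝ), HasDerivWithinAt (fun τ => d τ j) (d' t j) (Set.Ici 0) t)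
    (hq : ∀ t ∈ Set.Icc 0 T, ∀ m : ℝ, 0 ≤ m → (∀ i ≤ K, -m ≤ d t i) → ∀ j ≤ K, d t j = -m →
      -(C * m) ≤ d' t j)
    (h0 : ∀ j ≤ K, 0 ≤ d 0 j) : ∀ t ∈ Set.Icc 0 T, ∀ j ≤ K, 0 ≤ d t j := by
  have key : ∀ ε > 0, Set.Icc 0 T ⊆
      {t | ∀ j ∈ Finset.range (K+1), 0 ≤ d t j + ε * Real.exp ((C+1)*t)} := by
    intro ε hε
    have hder : ∀ j ≤ K, ∀ t ∈ Set.Ici (0:ℝ),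
        HasDerivWithinAt (fun τ => d τ j + ε * Real.exp ((C+1)*τ))
          (d' t j + ε * (Real.exp ((C+1)*t) * ((C+1)*1))) (Set.Ici 0) t := by
      intro j hj t ht
      exact (hd j hj t ht).add
        ((((hasDerivAt_id t).const_mul (C+1)).exp.const_mul ε).hasDerivWithinAt)
    apply IsClosed.Icc_subset_of_forall_exists_gt
    · have : {t | ∀ j ∈ Finset.range (K+1), 0 ≤ d t j + ε * Real.exp ((C+1)*t)} ∩ Set.Icc 0 T
        = Set.Icc 0 T ∩ ⋂ j ∈ Finset.range (K+1), 
          (Set.Icc 0 T ∩ (fun t => d t j + ε * Real.exp ((C+1)*t)) ⁻¹' Set.Ici 0) := by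
        ext t
        simp only [Set.mem_inter_iff, Set.mem_iInter, Set.mem_ofPred_eq, Set.mem_preimage,
          Set.mem_Ici]
        exact ⟨fun h => ⟨h.2, fun i hi => ⟨h.2, h.1 i hi⟩⟩, fun h => ⟨fun i hi => (h.2 i hi).2, h.1⟩⟩
      rw [this]
      refine isClosed_Icc.inter (isClosed_biInter fun j hj => ?_)
      apply ContinuousOn.preimage_isClosed_of_isClosed _ isClosed_Icc isClosed_Ici
      intro t ht
      exact ((hder j (by simpa [Nat.lt_succ_iff] using hj) t ht.1).continuousWithinAt).mono
        (fun x hx => hx.1)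
    · intro j hj
      have := h0 j (by simpa [Nat.lt_succ_iff] using hj)
      positivity
    · rintro x ⟨hxS, hx⟩ y hy
      have ev : ∀ᶠ z in nhdsWithin x (Set.Ioi x), ∀ j ∈ Finset.range (K+1),
          0 ≤ d z j + ε * Real.exp ((C+1)*z) := by
        rw [Filter.eventually_all_finset]
        intro j hj
        have hjK : j ≤ K := by simpa [Nat.lt_succ_iff] using hj
        have hD := (hder j hjK x hx.1).mono
          (show Set.Ioi x ⊆ Set.Ici 0 from fun z hz => hx.1.trans (le_of_lt hz))
        rcases (hxS j hj).lt_or_eq with hlt | heq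
        · filter_upwards [hD.continuousWithinAt.eventually (lt_mem_nhds hlt)] with z hz
          exact le_of_lt hz
        · have hm : 0 < ε * Real.exp ((C+1)*x) := by positivity
          have := hq x ⟨hx.1, hx.2.le⟩ (ε * Real.exp ((C+1)*x)) hm.le
            (fun i hi => by
              have := hxS i (Finset.mem_range.2 (by omega)); linarith) j hjK (by linarith)
          have hpos : 0 < d' x j + ε * (Real.exp ((C+1)*x) * ((C+1)*1)) := by nlinarith
          rw [hasDerivWithinAt_iff_tendsto_slope' (by simp)] at hD
          filter_upwards [hD.eventually (lt_mem_nhds hpos), self_mem_nhdsWithin] with z hz hzx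
          rw [slope_def_field, ← heq, sub_zero] at hz
          have hzx' : 0 < z - x := sub_pos.2 hzx
          exact ((div_pos_iff_of_pos_right hzx').1 hz).le
      have ev2 : ∀ᶠ z in nhdsWithin x (Set.Ioi x), z ∈ Set.Ioc x y := Ioc_mem_nhdsGT hy
      obtain ⟨z, h1, h2⟩ := (ev.and ev2).exists
      exact ⟨z, h1, h2⟩
  intro t ht j hj
  by_contra hneg
  push Not at hneg
  have hE := Real.exp_pos ((C+1)*t)
  have := key (-d t j / (2 * Real.exp ((C+1)*t))) (by apply div_pos <;> linarith) ht j
    (Finset.mem_range.2 (by omega))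
  have e : -d t j / (2 * Real.exp ((C+1)*t)) * Real.exp ((C+1)*t) = - d t j / 2 := by
    field_simp
  rw [e] at this
  linarith

lemma fLk_lip (L k : ℕ) (M : ℝ) : ∃ Λ : ℝ, 0 ≤ Λ ∧ ∀ x ∈ Set.Icc (-M) M, ∀ y ∈ Set.Icc (-M) M,
    |fLk L k x - fLk L k y| ≤ Λ * |x - y| := by
  have hf : ContDiff ℝ 1 (fLk L k) := by
    unfold fLk
    fun_prop
  obtain ⟨Λ, h⟩ := LocallyLipschitzOn.exists_lipschitzOnWith_of_compact
    (isCompact_Icc (a := -M) (b := M)) hf.locallyLipschitz.locallyLipschitzOn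
  refine ⟨Λ, Λ.2, fun x hx y hy => ?_⟩
  have := h.dist_le_mul x hx y hy
  simpa [Real.dist_eq] using this

/-- Almost monotonicity of `f` slightly outside `[0,1]`. -/
lemma almost_mono (f : ℝ → ℝ) (hf : MonotoneOn f (Set.Icc 0 1)) (M Λ : ℝ) (hM : 1 ≤ M) (hΛ : 0 ≤ Λ)
    (hlip : ∀ x ∈ Set.Icc (-M) M, ∀ y ∈ Set.Icc (-M) M, |f x - f y| ≤ Λ * |x - y|)
    (x y m r : ℝ) (hm : 0 ≤ m) (hr : 0 ≤ r) (hx : x ∈ Set.Icc (-M) M) (hy : y ∈ Set.Icc (-M) M)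
    (hx1 : -r ≤ x) (hx2 : x ≤ 1 + r) (hy1 : -r ≤ y) (hy2 : y ≤ 1 + r) (hxy : -m ≤ x - y) :
    -(Λ * (m + 2 * r)) ≤ f x - f y := by
  have hp : ∀ z : ℝ, -r ≤ z → z ≤ 1 + r → |z - max 0 (min z 1)| ≤ r := by
    intro z h1 h2
    rw [abs_le]
    constructor <;> rcases max_cases 0 (min z 1) with h | h <;> rcases min_cases z 1 with h' | h' <;>
      linarith
  have hp1 : ∀ z : ℝ, max 0 (min z 1) ∈ Set.Icc (0:ℝ) 1 := fun z =>
    ⟨le_max_left _ _, max_le zero_le_one (min_le_right _ _)⟩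
  have hp2 : ∀ z : ℝ, max 0 (min z 1) ∈ Set.Icc (-M) M := fun z =>
    ⟨by linarith [(hp1 z).1], (hp1 z).2.trans hM⟩
  have a1 := (abs_le.1 ((hlip x hx _ (hp2 x)).trans (mul_le_mul_of_nonneg_left (hp x hx1 hx2) hΛ))).1
  have a2 := (abs_le.1 ((hlip y hy _ (hp2 y)).trans (mul_le_mul_of_nonneg_left (hp y hy1 hy2) hΛ))).2
  have a3 : -(Λ * m) ≤ f (max 0 (min x 1)) - f (max 0 (min y 1)) := by
    rcases le_total y x with h | h
    · have := hf (hp1 y) (hp1 x) (max_le_max le_rfl (min_le_min h le_rfl))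
      have : 0 ≤ Λ * m := by positivity
      linarith
    · have b1 := (abs_le.1 (hlip _ (hp2 x) _ (hp2 y))).1
      have b2 : |max 0 (min x 1) - max 0 (min y 1)| ≤ m := by
        rw [abs_le]
        constructor <;> rcases max_cases 0 (min x 1) with h1 | h1 <;>
          rcases min_cases x 1 with h2 | h2 <;> rcases max_cases 0 (min y 1) with h3 | h3 <;>
          rcases min_cases y 1 with h4 | h4 <;> linarith
      have := mul_le_mul_of_nonneg_left b2 hΛ
      linarith
  linarith

/-- Lemma 5.1: if the initial conditions of the truncated system are
ordered, `1 = s_0(0) ≥ s_1(0) ≥ … ≥ s_K(0) ≥ s_{K+1}(0) = c`, then they stay ordered: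
`1 = s_0(t) ≥ s_1(t) ≥ … ≥ s_K(t) ≥ s_{K+1}(t) = c` for all `t ≥ 0`. -/
theorem truncSol_ordered (L k : ℕ) (hk : 1 ≤ k) (hkL : k ≤ L)
    (lam : ℝ) (hlam : 0 < lam) (K : ℕ) (c : ℝ) (hc : 0 ≤ c)
    (s : ℝ → ℕ → ℝ) (hs : IsTruncSol L k lam K c s)
    (hinit : ∀ j ≤ K, s 0 (j + 1) ≤ s 0 j) :
    ∀ t ∈ Set.Ici (0 : ℝ), s t 0 = 1 ∧ s t (K + 1) = c ∧ ∀ j ≤ K, s t (j + 1) ≤ s t j := by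
  obtain ⟨hs0, hsK, hsd⟩ := hs
  intro T hT
  refine ⟨hs0 T hT, hsK T hT, ?_⟩
  set F : ℝ → ℕ → ℝ := fun t j => if j = 0 ∨ j = K + 1 then 0 else
    lam * (fLk L k (s t (j - 1)) - fLk L k (s t j)) - k * (s t j - s t (j + 1)) with hF
  have hder : ∀ j ≤ K + 1, ∀ t ∈ Set.Ici (0:ℝ),
      HasDerivWithinAt (fun τ => s τ j) (F t j) (Set.Ici 0) t := by
    intro j hj t ht
    simp only [hF]
    split_ifs with h
    · rcases h with rfl | rfl
      · exact (hasDerivWithinAt_const t _ (1:ℝ)).congr (fun x hx => hs0 x hx) (hs0 t ht)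
      · exact (hasDerivWithinAt_const t _ c).congr (fun x hx => hsK x hx) (hsK t ht)
    · exact hsd j (by omega) (by omega) t ht
  -- a uniform bound on `[0,T]`
  have hbd : ∃ M : ℝ, 1 ≤ M ∧ ∀ j ≤ K + 1, ∀ t ∈ Set.Icc 0 T, s t j ∈ Set.Icc (-M) M := by
    have : ∀ j, ∃ B : ℝ, j ≤ K + 1 → ∀ t ∈ Set.Icc 0 T, |s t j| ≤ B := by
      intro j
      by_cases hj : j ≤ K + 1
      · obtain ⟨B, hB⟩ := (isCompact_Icc (a := (0:ℝ)) (b := T)).exists_bound_of_continuousOn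
          (f := fun t => s t j)
          (fun t ht => ((hder j hj t ht.1).continuousWithinAt).mono (fun x hx => hx.1))
        exact ⟨B, fun _ t ht => hB t ht⟩
      · exact ⟨0, fun h => absurd h hj⟩
    choose B hB using this
    refine ⟨1 + ∑ j ∈ Finset.range (K+2), |B j|, ?_, ?_⟩
    · have : 0 ≤ ∑ j ∈ Finset.range (K+2), |B j| := Finset.sum_nonneg fun _ _ => abs_nonneg _
      linarith
    · intro j hj t ht
      have h1 := hB j hj t ht
      have h2 : |B j| ≤ ∑ j ∈ Finset.range (K+2), |B j| :=
        Finset.single_le_sum (f := fun j => |B j|) (fun _ _ => abs_nonneg _)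
          (Finset.mem_range.2 (by omega))
      have h3 := le_abs_self (B j)
      exact abs_le.1 (by linarith)
  obtain ⟨M, hM, hsM⟩ := hbd
  obtain ⟨Λ, hΛ, hlip⟩ := fLk_lip L k M
  set A : ℝ := Λ * (1 + 2 * (K + 1)) with hA
  have hA0 : 0 ≤ A := by positivity
  have main := quasi_pos K (fun t j => s t j - s t (j+1)) (fun t j => F t j - F t (j+1)) T
    (lam * A + (lam * Λ + k))
    (fun j hj t ht => (hder j (by omega) t ht).sub (hder (j+1) (by omega) t ht)) ?_
    (fun j hj => sub_nonneg.2 (hinit j hj))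
  · intro j hj
    exact sub_nonneg.1 (main T ⟨hT, le_rfl⟩ j hj)
  intro t ht m hm hd j hj hdj
  have hup : ∀ j ≤ K + 1, s t j ≤ 1 + j * m := by
    intro j
    induction j with
    | zero => intro _; simp [hs0 t ht.1]
    | succ n ih =>
      intro hn
      have h1 := ih (by omega)
      have h2 := hd n (by omega)
      push_cast
      linarith
  have hlo : ∀ i ≤ K + 1, -(i * m) ≤ s t (K + 1 - i) := by
    intro i
    induction i with
    | zero => intro _; simp [hsK t ht.1, hc]
    | succ n ih =>
      intro hn
      have h1 := ih (by omega)
      have h2 := hd (K + 1 - (n + 1)) (by omega)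
      rw [show K + 1 - (n + 1) + 1 = K + 1 - n by omega] at h2
      rw [Nat.cast_succ]
      linarith
  have hup' : ∀ j ≤ K + 1, s t j ≤ 1 + (K + 1) * m := by
    intro j hj
    have h1 := hup j hj
    have h2 : (j : ℝ) ≤ K + 1 := by exact_mod_cast hj
    have := mul_le_mul_of_nonneg_right h2 hm
    linarith
  have hlo' : ∀ j ≤ K + 1, -((K + 1) * m) ≤ s t j := by
    intro j hj
    have h1 := hlo (K + 1 - j) (by omega)
    rw [show K + 1 - (K + 1 - j) = j by omega] at h1
    have h2 : ((K + 1 - j : ℕ) : ℝ) ≤ K + 1 := by exact_mod_cast Nat.sub_le _ _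
    have := mul_le_mul_of_nonneg_right h2 hm
    linarith
  have hr : (0:ℝ) ≤ (K + 1) * m := by positivity
  have hlow : -(lam * A * m) ≤ F t j := by
    have h0 : 0 ≤ lam * A * m := by positivity
    simp only [hF]
    split_ifs with h
    · linarith
    · have hd1 := hd (j - 1) (by omega)
      rw [show j - 1 + 1 = j by omega] at hd1
      have := almost_mono (fLk L k) (fLk_mono L k hk hkL) M Λ hM hΛ hlip (s t (j-1)) (s t j) m
        ((K+1) * m) hm hr (hsM _ (by omega) t ht) (hsM _ (by omega) t ht) (hlo' _ (by omega))
        (hup' _ (by omega)) (hlo' _ (by omega)) (hup' _ (by omega)) hd1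
      have h2 := mul_le_mul_of_nonneg_left this hlam.le
      have h3 : (0:ℝ) ≤ k * m := by positivity
      rw [hdj]
      have h4 : lam * A * m = lam * (Λ * (m + 2 * ((K + 1) * m))) := by rw [hA]; ring
      linarith
  have hhigh : F t (j+1) ≤ (lam * Λ + k) * m := by
    have h0 : 0 ≤ (lam * Λ + k) * m := by positivity
    by_cases h : j + 1 = 0 ∨ j + 1 = K + 1
    · have e : F t (j+1) = 0 := if_pos h
      linarith
    · have e : F t (j+1) = lam * (fLk L k (s t (j + 1 - 1)) - fLk L k (s t (j+1)))
          - k * (s t (j+1) - s t (j + 1 + 1)) := if_neg h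
      rw [e]
      have hd1 := hd (j + 1) (by omega)
      rw [Nat.add_sub_cancel]
      have h1 := (abs_le.1 (hlip (s t j) (hsM _ (by omega) t ht) (s t (j+1))
        (hsM _ (by omega) t ht))).2
      rw [hdj, abs_neg, abs_of_nonneg hm] at h1
      have h2 := mul_le_mul_of_nonneg_left h1 hlam.le
      have h3 := mul_le_mul_of_nonneg_left hd1 (Nat.cast_nonneg (α := ℝ) k)
      linarith
  linarith
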